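/- Let s ≥ 2, and let V = (Fin s → ℝ)³ carry the bilinear form g₃ₛ and the quadrilinear map R₃ₛ. For every s × s real orthogonal matrix ξ (ξᵀξ = I), the linear map Φ_ξ : V → V given by Φ_ξ(u, t, v) := (ξu, ξt, ξv) satisfies g₃ₛ(Φ_ξ x, Φ_ξ y) = g₃ₛ(x, y) and R₃ₛ(Φ_ξ x, Φ_ξ y, Φ_ξ z, Φ_ξ w) = R₃ₛ(x, y, z, w) for all x, y, z, w ∈ V. -/

import Mathlib

/-!
Since `αᵢᵢ = 0`, the restriction `i ≠ j` in `R₃ₛ` is vacuous. Expanding the products then turns the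
double sum into a polynomial in the Euclidean dot products of the `u`- and `t`-components
(`R3_eq_dotProduct`). The form `g₃ₛ` is likewise a combination of dot products
(`g3_eq_dotProduct`). As an orthogonal matrix preserves dot products, it preserves both.
-/

/-- The model vector space `ℝ^{3s}`, written as triples `x = (xᵘ, xᵗ, xᵛ)`. -/
abbrev V3 (s : ℕ) := (Fin s → ℝ) × (Fin s → ℝ) × (Fin s → ℝ)

/-- The signature `(2s, s)` inner product
`g₃ₛ(x,y) = Σᵢ (xᵘᵢ yᵛᵢ + xᵛᵢ yᵘᵢ − xᵗᵢ yᵗᵢ)`. -/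
noncomputable def g3 {s : ℕ} (x y : V3 s) : ℝ :=
  ∑ i, (x.1 i * y.2.2 i + x.2.2 i * y.1 i - x.2.1 i * y.2.1 i)

/-- `αᵢⱼ(x,y) := xᵘᵢ yᵘⱼ − xᵘⱼ yᵘᵢ`. -/
noncomputable def alphaF {s : ℕ} (i j : Fin s) (x y : V3 s) : ℝ :=
  x.1 i * y.1 j - x.1 j * y.1 i

/-- `βᵢⱼ(x,y) := xᵘⱼ yᵗᵢ − xᵗᵢ yᵘⱼ`. -/
noncomputable def betaF {s : ℕ} (i j : Fin s) (x y : V3 s) : ℝ :=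
  x.1 j * y.2.1 i - x.2.1 i * y.1 j

/-- The algebraic curvature tensor
`R₃ₛ(x,y,z,w) = Σ_{i≠j} [αᵢⱼ(x,y) βᵢⱼ(z,w) + βᵢⱼ(x,y) αᵢⱼ(z,w)]`. -/
noncomputable def R3 {s : ℕ} (x y z w : V3 s) : ℝ :=
  ∑ i, ∑ j, if i = j then 0 else
    (alphaF i j x y * betaF i j z w + betaF i j x y * alphaF i j z w)

/-- The diagonal action of an orthogonal matrix `ξ` on `V = ℝ^{3s}`. -/
noncomputable def PhiXi {s : ℕ} (ξ : Matrix (Fin s) (Fin s) ℝ) (x : V3 s) : V3 s :=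
  (ξ.mulVec x.1, ξ.mulVec x.2.1, ξ.mulVec x.2.2)

theorem dotProduct_mulVec_of_orthogonal {s : ℕ} {ξ : Matrix (Fin s) (Fin s) ℝ}
    (hξ : ξ.transpose * ξ = 1) (a b : Fin s → ℝ) :
    (ξ.mulVec a) ⬝ᵥ (ξ.mulVec b) = a ⬝ᵥ b := by
  rw [Matrix.dotProduct_mulVec, ← Matrix.mulVec_transpose, Matrix.mulVec_mulVec, hξ,
    Matrix.one_mulVec]

theorem g3_eq_dotProduct {s : ℕ} (x y : V3 s) :
    g3 x y = x.1 ⬝ᵥ y.2.2 + x.2.2 ⬝ᵥ y.1 - x.2.1 ⬝ᵥ y.2.1 := by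
  simp only [g3, dotProduct, Finset.sum_add_distrib, Finset.sum_sub_distrib]

theorem sum_alphaF_mul_betaF {s : ℕ} (x y z w : V3 s) :
    ∑ i, ∑ j, alphaF i j x y * betaF i j z w =
      (x.1 ⬝ᵥ w.2.1) * (y.1 ⬝ᵥ z.1) - (x.1 ⬝ᵥ z.2.1) * (y.1 ⬝ᵥ w.1)
        - (y.1 ⬝ᵥ w.2.1) * (x.1 ⬝ᵥ z.1) + (y.1 ⬝ᵥ z.2.1) * (x.1 ⬝ᵥ w.1) := by
  simp only [dotProduct, Finset.sum_mul_sum, ← Finset.sum_sub_distrib, ← Finset.sum_add_distrib,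
    alphaF, betaF]
  refine Finset.sum_congr rfl fun i _ => Finset.sum_congr rfl fun j _ => ?_
  ring

/-- The diagonal terms may be included because `αᵢᵢ = 0`; the second half of `R₃ₛ` is the first with
the pairs `(x, y)` and `(z, w)` exchanged. -/
theorem R3_eq_sum {s : ℕ} (x y z w : V3 s) :
    R3 x y z w = (∑ i, ∑ j, alphaF i j x y * betaF i j z w)
      + ∑ i, ∑ j, alphaF i j z w * betaF i j x y := by
  simp only [R3, ← Finset.sum_add_distrib]
  refine Finset.sum_congr rfl fun i _ => Finset.sum_congr rfl fun j _ => ?_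
  split_ifs with h
  · subst h
    simp only [alphaF]
    ring
  · ring

theorem R3_eq_dotProduct {s : ℕ} (x y z w : V3 s) :
    R3 x y z w =
      ((x.1 ⬝ᵥ w.2.1) * (y.1 ⬝ᵥ z.1) - (x.1 ⬝ᵥ z.2.1) * (y.1 ⬝ᵥ w.1)
        - (y.1 ⬝ᵥ w.2.1) * (x.1 ⬝ᵥ z.1) + (y.1 ⬝ᵥ z.2.1) * (x.1 ⬝ᵥ w.1))
      + ((z.1 ⬝ᵥ y.2.1) * (w.1 ⬝ᵥ x.1) - (z.1 ⬝ᵥ x.2.1) * (w.1 ⬝ᵥ y.1)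
        - (w.1 ⬝ᵥ y.2.1) * (z.1 ⬝ᵥ x.1) + (w.1 ⬝ᵥ x.2.1) * (z.1 ⬝ᵥ y.1)) := by
  rw [R3_eq_sum, sum_alphaF_mul_betaF, sum_alphaF_mul_betaF]

/-- for every orthogonal `ξ`, the diagonal action `Φ_ξ` preserves
`g₃ₛ` and `R₃ₛ`. -/
theorem orthogonal_diagonal_action_preserves_g3_R3
    (s : ℕ) (hs : 2 ≤ s)
    (ξ : Matrix (Fin s) (Fin s) ℝ) (hξ : ξ.transpose * ξ = 1) :
    ∀ x y z w : V3 s,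
      g3 (PhiXi ξ x) (PhiXi ξ y) = g3 x y ∧
      R3 (PhiXi ξ x) (PhiXi ξ y) (PhiXi ξ z) (PhiXi ξ w) = R3 x y z w := by
  intro x y z w
  constructor
  · simp only [g3_eq_dotProduct, PhiXi, dotProduct_mulVec_of_orthogonal hξ]
  · simp only [R3_eq_dotProduct, PhiXi, dotProduct_mulVec_of_orthogonal hξ]
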